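/- arXiv:math/0311173 — 2 statements merged into one kernel-verified Lean document; each statement's English description precedes it below -/
import Mathlib

section
/- Let p be a positive integer, ω = e^{2πi/3}, and for ℓ ∈ {0,1,2} let g_ℓ(p) denote the number of conjugacy classes (under conjugation by elements of SU(3)) of matrices A ∈ SU(3) satisfying A^p = ω^ℓ·I and having exactly two distinct eigenvalues. If p is not divisible by 3, then g_ℓ(p) = p − 1 for each ℓ ∈ {0,1,2}. If p is divisible by 3, then g_0(p) = p − 3 and g_1(p) = g_2(p) = p. -/
/-!
A matrix in `SU(3)` with exactly two distinct eigenvalues is unitarily diagonalizable, and since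
its determinant is `1` it is conjugate to `diag(a, a, a⁻²)` with `a ≠ a⁻²`, that is `a³ ≠ 1`
(`exists_normal_form`). A conjugating unitary matrix can be rescaled into `SU(3)`
(`exists_SU_conj`), and the spectrum `{a, a⁻²}` determines `a`. As `ζ³ = 1`, the condition
`Aᵖ = ζ` reduces to `aᵖ = ζ`, so the classes correspond to the `p`-th roots `a` of `ζ` with
`a³ ≠ 1` (`countTwo_eq`).

There are `p` roots of `aᵖ = ζ`. The number of those that are also cube roots of unity is `1` if
`3 ∤ p`; if `3 ∣ p` it is `3` for `ζ = 1` and `0` otherwise.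
-/

open Matrix in
/-- The special unitary group `SU(n)` of `n × n` complex matrices with determinant `1`,
as a subgroup of the unitary group. -/
noncomputable def SU (n : ℕ) : Subgroup (Matrix.unitaryGroup (Fin n) ℂ) where
  carrier := {A | (A : Matrix (Fin n) (Fin n) ℂ).det = 1}
  one_mem' := by simp
  mul_mem' := by
    intro a b ha hb
    show ((a * b : Matrix.unitaryGroup (Fin n) ℂ) : Matrix (Fin n) (Fin n) ℂ).det = 1
    rw [Submonoid.coe_mul, Matrix.det_mul]
    rw [Set.mem_setOf_eq] at ha hb
    rw [ha, hb, mul_one]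
  inv_mem' := by
    intro a ha
    show ((a⁻¹ : Matrix.unitaryGroup (Fin n) ℂ) : Matrix (Fin n) (Fin n) ℂ).det = 1
    rw [Set.mem_setOf_eq] at ha
    have : ((a⁻¹ : Matrix.unitaryGroup (Fin n) ℂ) : Matrix (Fin n) (Fin n) ℂ)
        = star (a : Matrix (Fin n) (Fin n) ℂ) := rfl
    rw [this]
    show (Matrix.conjTranspose _).det = 1
    rw [Matrix.det_conjTranspose, ha, star_one]

/-- The underlying matrix of an element of `SU(n)`. -/
noncomputable abbrev matSU {n : ℕ} (A : SU n) : Matrix (Fin n) (Fin n) ℂ := A.val.val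

/-- The number of conjugacy classes of a conjugation-invariant subset `S` of `SU(3)`:
the cardinality of the quotient of `S` by `A ∼ U·A·U⁻¹` for `U ∈ SU(3)`. -/
noncomputable def numConjClasses (S : Set (SU 3)) : ℕ :=
  Nat.card (Quotient (Setoid.mk
    (fun A B : S => ∃ U : SU 3, (B : SU 3) = U * (A : SU 3) * U⁻¹)
    (by
      constructor
      · intro A; exact ⟨1, by group⟩
      · rintro A B ⟨U, hU⟩; exact ⟨U⁻¹, by rw [hU]; group⟩
      · rintro A B C ⟨U, hU⟩ ⟨V, hV⟩; exact ⟨V * U, by rw [hV, hU]; group⟩)))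

/-- The cube root of unity `ω = e^{2πi/3}`. -/
noncomputable def omega3 : ℂ := Complex.exp (2 * Real.pi * Complex.I / 3)

/-- `f(p, ζ)`: the number of `SU(3)`-conjugacy classes of matrices `A ∈ SU(3)` with
`A^p = ζ·I` having three pairwise distinct eigenvalues. -/
noncomputable def countThree (p : ℕ) (ζ : ℂ) : ℕ :=
  numConjClasses {A : SU 3 | matSU A ^ p = ζ • (1 : Matrix (Fin 3) (Fin 3) ℂ) ∧
    (spectrum ℂ (matSU A)).ncard = 3}

/-- `g(p, ζ)`: the number of `SU(3)`-conjugacy classes of matrices `A ∈ SU(3)` with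
`A^p = ζ·I` having exactly two distinct eigenvalues. -/
noncomputable def countTwo (p : ℕ) (ζ : ℂ) : ℕ :=
  numConjClasses {A : SU 3 | matSU A ^ p = ζ • (1 : Matrix (Fin 3) (Fin 3) ℂ) ∧
    (spectrum ℂ (matSU A)).ncard = 2}

/-! ### Diagonalization and conjugacy in `SU(3)` -/

open scoped Matrix.Norms.L2Operator in
/-- If a unitary `M` has exactly the two eigenvalues `x ≠ y`, then `P = (M - y) / (x - y)` is
normal with spectrum in `{0, 1}`, hence Hermitian, so the spectral theorem for `P` diagonalizes
`M = y + (x - y) P`. -/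
lemma exists_unitary_diagonal {M : Matrix (Fin 3) (Fin 3) ℂ}
    (hM : M ∈ Matrix.unitaryGroup (Fin 3) ℂ) (hs : (spectrum ℂ M).ncard = 2) :
    ∃ U ∈ Matrix.unitaryGroup (Fin 3) ℂ, ∃ d : Fin 3 → ℂ,
      M = U * Matrix.diagonal d * star U := by
  obtain ⟨x, y, hxy, hsp⟩ := Set.ncard_eq_two.mp hs
  have hne : x - y ≠ 0 := sub_ne_zero.mpr hxy
  set P : Matrix (Fin 3) (Fin 3) ℂ :=
    (x - y)⁻¹ • (M - algebraMap ℂ (Matrix (Fin 3) (Fin 3) ℂ) y) with hP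
  have hMP : M = algebraMap ℂ (Matrix (Fin 3) (Fin 3) ℂ) y + (x - y) • P := by
    rw [hP, smul_inv_smul₀ hne]
    abel
  have hMn : star M * M = M * star M := by
    rw [Matrix.mem_unitaryGroup_iff'.mp hM, Matrix.mem_unitaryGroup_iff.mp hM]
  have hPn : IsStarNormal P := by
    refine ⟨?_⟩
    have h1 : Commute (star M) M := hMn
    rw [hP, star_smul, star_sub, ← algebraMap_star_comm]
    refine Commute.smul_left (Commute.smul_right ?_ _) _
    refine Commute.sub_left (Commute.sub_right h1 ?_) (Commute.sub_right ?_ ?_)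
    · exact (Algebra.commutes _ _).symm
    · exact Algebra.commutes _ _
    · exact Algebra.commutes _ _
  have hPs : spectrum ℂ P ⊆ Set.range (algebraMap ℝ ℂ) := by
    have h0 : (spectrum ℂ (M - algebraMap ℂ (Matrix (Fin 3) (Fin 3) ℂ) y)) = {x - y, 0} := by
      rw [← spectrum.sub_singleton_eq, hsp]
      simp [Set.image_insert_eq]
    rw [hP, spectrum.smul_eq_smul _ _ (by rw [h0]; simp), h0]
    rintro z ⟨w, hw, rfl⟩
    rcases hw with rfl | rfl
    · exact ⟨1, by simp [hne]⟩
    · exact ⟨0, by simp⟩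
  have hPsa : IsSelfAdjoint P :=
    QuasispectrumRestricts.isSelfAdjoint P
      (SpectrumRestricts.of_subset_range_algebraMap Complex.ofReal_re hPs)
  have hPh : P.IsHermitian := hPsa
  refine ⟨hPh.eigenvectorUnitary, hPh.eigenvectorUnitary.2,
    fun i => y + (x - y) * (hPh.eigenvalues i : ℂ), ?_⟩
  have hst := hPh.spectral_theorem
  rw [Unitary.conjStarAlgAut_apply] at hst
  have hU : (hPh.eigenvectorUnitary : Matrix (Fin 3) (Fin 3) ℂ) *
      star (hPh.eigenvectorUnitary : Matrix (Fin 3) (Fin 3) ℂ) = 1 :=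
    Matrix.mem_unitaryGroup_iff.mp hPh.eigenvectorUnitary.2
  have hd : Matrix.diagonal (fun i => y + (x - y) * (hPh.eigenvalues i : ℂ)) =
      y • (1 : Matrix (Fin 3) (Fin 3) ℂ) +
        (x - y) • Matrix.diagonal (RCLike.ofReal ∘ hPh.eigenvalues) := by
    ext i j
    by_cases hij : i = j
    · subst hij; simp
    · simp [hij]
  rw [hd, mul_add, add_mul, mul_smul_comm, smul_mul_assoc, mul_smul_comm, smul_mul_assoc,
    mul_one, hU]
  conv_lhs => rw [hMP, hst, Algebra.algebraMap_eq_smul_one]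

lemma spectrum_unitary_conj {U D : Matrix (Fin 3) (Fin 3) ℂ}
    (hU : U ∈ Matrix.unitaryGroup (Fin 3) ℂ) :
    spectrum ℂ (U * D * star U) = spectrum ℂ D := by
  have := spectrum.units_conjugate (R := ℂ) (a := D) (u := Unitary.toUnits ⟨U, hU⟩)
  simpa using this

/-- The order of the diagonal entries can be changed by permuting the columns of the
diagonalizing unitary; with exactly two eigenvalues the repeated one is put first. -/
lemma exists_normal_form {M : Matrix (Fin 3) (Fin 3) ℂ}
    (hM : M ∈ Matrix.unitaryGroup (Fin 3) ℂ) (hs : (spectrum ℂ M).ncard = 2) :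
    ∃ U ∈ Matrix.unitaryGroup (Fin 3) ℂ, ∃ a b : ℂ, a ≠ b ∧
      M = U * Matrix.diagonal ![a, a, b] * star U := by
  obtain ⟨U, hU, d, rfl⟩ := exists_unitary_diagonal hM hs
  rw [spectrum_unitary_conj hU, spectrum_diagonal] at hs
  have key : ∃ σ : Equiv.Perm (Fin 3), d (σ 0) = d (σ 1) := by
    by_contra! hcon
    have h01 := hcon 1
    have h02 := hcon (Equiv.swap 1 2)
    have h12 := hcon (Equiv.swap 0 2)
    have e1 : (Equiv.swap 1 2 : Equiv.Perm (Fin 3)) 0 = 0 := by decide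
    have e2 : (Equiv.swap 0 2 : Equiv.Perm (Fin 3)) 1 = 1 := by decide
    simp only [e1, e2, Equiv.swap_apply_left, Equiv.Perm.one_apply] at h01 h02 h12
    have hinj : Function.Injective d := by
      intro i j hij
      fin_cases i <;> fin_cases j <;> simp_all
    rw [← Set.image_univ, Set.ncard_image_of_injective _ hinj, Set.ncard_univ] at hs
    simp at hs
  obtain ⟨σ, hσ⟩ := key
  have hdσ : d ∘ σ = ![d (σ 0), d (σ 0), d (σ 2)] := by
    funext i
    fin_cases i
    · rfl
    · exact hσ.symm
    · rfl
  refine ⟨U.submatrix id σ, ?_, d (σ 0), d (σ 2), ?_, ?_⟩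
  · rw [Matrix.mem_unitaryGroup_iff, Matrix.star_eq_conjTranspose, Matrix.conjTranspose_submatrix,
      Matrix.submatrix_mul_equiv, ← Matrix.star_eq_conjTranspose,
      Matrix.mem_unitaryGroup_iff.mp hU]
    simp
  · intro h
    have hr : Set.range d = {d (σ 0)} := by
      rw [← σ.surjective.range_comp d, hdσ, ← h]
      ext z
      simp
    rw [hr] at hs
    simp at hs
  · rw [← hdσ, ← Matrix.submatrix_diagonal_equiv, Matrix.star_eq_conjTranspose,
      Matrix.star_eq_conjTranspose, Matrix.conjTranspose_submatrix, Matrix.submatrix_mul_equiv,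
      Matrix.submatrix_mul_equiv, Matrix.submatrix_id_id]

/-- Conjugacy by a unitary matrix implies conjugacy in `SU(3)`: the conjugating matrix may be
rescaled by a cube root of the inverse of its determinant. -/
lemma exists_SU_conj {A B : SU 3} {U : Matrix (Fin 3) (Fin 3) ℂ}
    (hU : U ∈ Matrix.unitaryGroup (Fin 3) ℂ) (h : matSU B = U * matSU A * star U) :
    ∃ V : SU 3, B = V * A * V⁻¹ := by
  have hUU := Matrix.mem_unitaryGroup_iff.mp hU
  have hdet : U.det * star U.det = 1 := by
    have := congrArg Matrix.det hUU
    rwa [Matrix.det_mul, Matrix.star_eq_conjTranspose, Matrix.det_conjTranspose,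
      Matrix.det_one] at this
  have hdn : ‖U.det‖ = 1 := by
    have h2 := congrArg norm hdet
    rw [norm_mul, norm_star, norm_one] at h2
    nlinarith [norm_nonneg U.det]
  obtain ⟨c, hc⟩ := IsAlgClosed.exists_pow_nat_eq (star U.det) (n := 3) (by norm_num)
  have hcn : ‖c‖ = 1 := by
    have h3 : ‖c‖ ^ 3 = 1 := by rw [← norm_pow, hc, norm_star, hdn]
    exact (pow_eq_one_iff_of_nonneg (norm_nonneg c) (by norm_num)).mp h3
  have hcc : c * star c = 1 := by
    rw [Complex.star_def, Complex.mul_conj, Complex.normSq_eq_norm_sq, hcn]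
    simp
  have hV : c • U ∈ Matrix.unitaryGroup (Fin 3) ℂ := by
    rw [Matrix.mem_unitaryGroup_iff, star_smul, smul_mul_smul_comm, hcc, hUU, one_smul]
  have hVdet : (c • U).det = 1 := by
    rw [Matrix.det_smul, Fintype.card_fin, hc, mul_comm, hdet]
  refine ⟨⟨⟨c • U, hV⟩, hVdet⟩, ?_⟩
  apply Subtype.ext
  apply Subtype.ext
  change matSU B = (c • U) * matSU A * star (c • U)
  rw [h, star_smul, smul_mul_assoc, smul_mul_smul_comm, hcc, one_smul]

/-! ### Classes and admissible double eigenvalues -/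

/-- The diagonal matrix `diag(a, a, a⁻²)` as an element of `SU(3)`, for `|a| = 1`. -/
noncomputable def diagSU (a : ℂ) (ha : ‖a‖ = 1) : SU 3 :=
  ⟨⟨Matrix.diagonal ![a, a, (a ^ 2)⁻¹], by
    have haa : a * star a = 1 := by
      rw [Complex.star_def, Complex.mul_conj, Complex.normSq_eq_norm_sq, ha]
      simp
    have hb : (a ^ 2)⁻¹ * star (a ^ 2)⁻¹ = 1 := by
      rw [star_inv₀, star_pow, ← mul_inv, ← mul_pow, haa, one_pow, inv_one]
    rw [Matrix.mem_unitaryGroup_iff, Matrix.star_eq_conjTranspose, Matrix.diagonal_conjTranspose,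
      Matrix.diagonal_mul_diagonal, ← Matrix.diagonal_one]
    congr 1
    funext i
    fin_cases i
    · exact haa
    · exact haa
    · exact hb⟩, by
    have ha0 : a ≠ 0 := by
      rintro rfl
      simp at ha
    change (Matrix.diagonal ![a, a, (a ^ 2)⁻¹]).det = 1
    rw [Matrix.det_diagonal, Fin.prod_univ_three]
    simp only [Matrix.cons_val]
    field_simp⟩

lemma matSU_diagSU (a : ℂ) (ha : ‖a‖ = 1) :
    matSU (diagSU a ha) = Matrix.diagonal ![a, a, (a ^ 2)⁻¹] := rfl

lemma spectrum_diag (a b : ℂ) :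
    spectrum ℂ (Matrix.diagonal ![a, a, b] : Matrix (Fin 3) (Fin 3) ℂ) = {a, b} := by
  rw [spectrum_diagonal]
  ext z
  simp [eq_comm, or_comm]

lemma diag_pow_eq_smul_iff (a b ζ : ℂ) (p : ℕ) :
    (Matrix.diagonal ![a, a, b] : Matrix (Fin 3) (Fin 3) ℂ) ^ p = ζ • 1 ↔
      a ^ p = ζ ∧ b ^ p = ζ := by
  rw [Matrix.diagonal_pow, Matrix.smul_one_eq_diagonal, Matrix.diagonal_injective.eq_iff,
    funext_iff]
  simp [Fin.forall_fin_succ]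

lemma unitary_conj_pow {U D : Matrix (Fin 3) (Fin 3) ℂ}
    (hU : U ∈ Matrix.unitaryGroup (Fin 3) ℂ) (p : ℕ) :
    (U * D * star U) ^ p = U * D ^ p * star U := by
  induction p with
  | zero => simp [Matrix.mem_unitaryGroup_iff.mp hU]
  | succ n ih =>
    calc (U * D * star U) ^ (n + 1) = U * D ^ n * (star U * U) * D * star U := by
          rw [pow_succ, ih]; simp only [mul_assoc]
      _ = U * D ^ (n + 1) * star U := by
          rw [Matrix.mem_unitaryGroup_iff'.mp hU, mul_one, pow_succ, mul_assoc U]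

/-- Sending `a` to the class of `diag(a, a, a⁻²)` is a bijection from the `p`-th roots `a` of `ζ`
with `a³ ≠ 1` (the condition `a ≠ a⁻²`) to the classes counted by `countTwo`. The requirement
`(a⁻²)ᵖ = ζ` on the simple eigenvalue is automatic since `ζ³ = 1`. -/
lemma countTwo_eq {p : ℕ} (hp : 0 < p) {ζ : ℂ} (hζ : ζ ^ 3 = 1) :
    countTwo p ζ = Nat.card {a : ℂ // a ^ p = ζ ∧ a ^ 3 ≠ 1} := by
  have hζn : ‖ζ‖ = 1 := by
    have h3 : ‖ζ‖ ^ 3 = 1 := by rw [← norm_pow, hζ, norm_one]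
    exact (pow_eq_one_iff_of_nonneg (norm_nonneg ζ) (by norm_num)).mp h3
  have hζ0 : ζ ≠ 0 := by
    rintro rfl
    simp at hζn
  have hnorm : ∀ a : ℂ, a ^ p = ζ → ‖a‖ = 1 := by
    intro a ha
    have h3 : ‖a‖ ^ p = 1 := by rw [← norm_pow, ha, hζn]
    exact (pow_eq_one_iff_of_nonneg (norm_nonneg a) hp.ne').mp h3
  have hb : ∀ a : ℂ, a ^ p = ζ → ((a ^ 2)⁻¹) ^ p = ζ := by
    intro a ha
    rw [inv_pow, ← pow_mul, mul_comm, pow_mul, ha]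
    field_simp
    rw [hζ]
  have hne : ∀ a : ℂ, a ≠ 0 → (a = (a ^ 2)⁻¹ ↔ a ^ 3 = 1) := by
    intro a ha
    rw [← mul_eq_one_iff_eq_inv₀ (pow_ne_zero 2 ha)]
    ring_nf
  have h0 : ∀ a : ℂ, a ^ p = ζ → a ≠ 0 := by
    intro a ha h
    have := hnorm a ha
    rw [h] at this
    simp at this
  unfold countTwo numConjClasses
  symm
  refine Nat.card_congr (Equiv.ofBijective (fun a => Quotient.mk _
    ⟨diagSU a.1 (hnorm a.1 a.2.1), ?_, ?_⟩) ⟨?_, ?_⟩)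
  · rw [matSU_diagSU, diag_pow_eq_smul_iff]
    exact ⟨a.2.1, hb _ a.2.1⟩
  · rw [matSU_diagSU, spectrum_diag]
    exact Set.ncard_pair fun h => a.2.2 ((hne _ (h0 _ a.2.1)).mp h)
  · rintro ⟨a, ha, ha3⟩ ⟨c, hc, hc3⟩ hac
    obtain ⟨V, hV⟩ := Quotient.exact hac
    have hVm : matSU (diagSU c (hnorm c hc)) =
        matSU V * matSU (diagSU a (hnorm a ha)) * star (matSU V) :=
      congrArg matSU hV
    have hs := congrArg (spectrum ℂ) hVm
    rw [spectrum_unitary_conj V.1.2, matSU_diagSU, matSU_diagSU, spectrum_diag,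
      spectrum_diag] at hs
    apply Subtype.ext
    change a = c
    have hmem : c ∈ ({a, (a ^ 2)⁻¹} : Set ℂ) := hs ▸ Set.mem_insert _ _
    have hmem2 : a ∈ ({c, (c ^ 2)⁻¹} : Set ℂ) := hs ▸ Set.mem_insert _ _
    rcases hmem with h | h
    · exact h.symm
    rcases hmem2 with hca | hca
    · exact hca
    -- Otherwise `c = a⁻²` and `a = c⁻² = a⁴`, which forces `a³ = 1`.
    exfalso
    rw [Set.mem_singleton_iff] at h hca
    apply ha3
    have ha0 := h0 a ha
    rw [h] at hca
    field_simp at hca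
    exact hca.symm
  · intro q
    induction q using Quotient.inductionOn with
    | h A =>
    obtain ⟨A, hAp, hAs⟩ := A
    obtain ⟨U, hU, a, b, hab, hA⟩ := exists_normal_form A.1.2 hAs
    have hUU := Matrix.mem_unitaryGroup_iff'.mp hU
    have hpow : (Matrix.diagonal ![a, a, b] : Matrix (Fin 3) (Fin 3) ℂ) ^ p = ζ • 1 := by
      have h1 : U * Matrix.diagonal ![a, a, b] ^ p * star U = ζ • 1 := by
        rw [← unitary_conj_pow hU, ← hA]
        exact hAp
      calc (Matrix.diagonal ![a, a, b] : Matrix (Fin 3) (Fin 3) ℂ) ^ p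
          = star U * U * Matrix.diagonal ![a, a, b] ^ p * (star U * U) := by
            rw [hUU, one_mul, mul_one]
        _ = star U * (U * Matrix.diagonal ![a, a, b] ^ p * star U) * U := by
            simp only [mul_assoc]
        _ = ζ • 1 := by
            rw [h1, mul_smul_comm, smul_mul_assoc, mul_one, hUU]
    rw [diag_pow_eq_smul_iff] at hpow
    have ha0 := h0 a hpow.1
    have hdet : a * a * b = 1 := by
      have h1 : (matSU A).det = 1 := A.2
      have h2 : (matSU A).det = (Matrix.diagonal ![a, a, b]).det := by
        change Matrix.det A.1.1 = _
        rw [hA, mul_assoc, Matrix.det_mul_comm, mul_assoc, hUU, mul_one]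
      rw [h1, Matrix.det_diagonal, Fin.prod_univ_three] at h2
      exact h2.symm
    have hbeq : b = (a ^ 2)⁻¹ := by
      rw [← mul_eq_one_iff_eq_inv₀ (pow_ne_zero 2 ha0), ← hdet]
      ring
    subst hbeq
    refine ⟨⟨a, hpow.1, fun h => hab ((hne a ha0).mpr h)⟩, ?_⟩
    apply Quotient.sound
    exact exists_SU_conj hU hA

/-! ### Counting the roots -/

lemma ncard_roots {p : ℕ} (hp : 0 < p) {ζ : ℂ} (hζ : ζ ≠ 0) :
    {a : ℂ | a ^ p = ζ}.Finite ∧ {a : ℂ | a ^ p = ζ}.ncard = p := by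
  have hprim := Complex.isPrimitiveRoot_exp p hp.ne'
  have hset : {a : ℂ | a ^ p = ζ} = ((Polynomial.nthRoots p ζ).toFinset : Set ℂ) := by
    ext a
    simp [Polynomial.mem_nthRoots hp]
  rw [hset]
  refine ⟨Finset.finite_toSet _, ?_⟩
  rw [Set.ncard_coe_finset, Multiset.toFinset_card_of_nodup (hprim.nthRoots_nodup hζ),
    hprim.card_nthRoots, if_pos (IsAlgClosed.exists_pow_nat_eq ζ hp)]

lemma countTwo_add {p : ℕ} (hp : 0 < p) {ζ : ℂ} (hζ : ζ ^ 3 = 1) :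
    countTwo p ζ + {a : ℂ | a ^ p = ζ ∧ a ^ 3 = 1}.ncard = p := by
  have hζ0 : ζ ≠ 0 := by
    rintro rfl
    simp at hζ
  obtain ⟨hfin, hcard⟩ := ncard_roots hp hζ0
  rw [countTwo_eq hp hζ]
  have h := Set.ncard_sdiff_add_ncard_of_subset
    (s := {a : ℂ | a ^ p = ζ ∧ a ^ 3 = 1}) (t := {a : ℂ | a ^ p = ζ}) (fun a ha => ha.1) hfin
  rw [hcard] at h
  have hd : {a : ℂ | a ^ p = ζ} \ {a : ℂ | a ^ p = ζ ∧ a ^ 3 = 1} =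
      {a : ℂ | a ^ p = ζ ∧ a ^ 3 ≠ 1} := by
    ext a
    simp only [Set.mem_sdiff, Set.mem_ofPred_eq]
    tauto
  rw [hd] at h
  exact h

lemma omega3_prim : IsPrimitiveRoot omega3 3 := by
  have := Complex.isPrimitiveRoot_exp 3 (by norm_num)
  simpa [omega3] using this

/-- For `3 ∤ p`, raising to the `p`-th power permutes the cube roots of unity: it is the identity
or the inversion `a ↦ a²`. -/
lemma ncard_of_not_dvd {p : ℕ} (hp : ¬ 3 ∣ p) {ζ : ℂ} (hζ : ζ ^ 3 = 1) :
    {a : ℂ | a ^ p = ζ ∧ a ^ 3 = 1}.ncard = 1 := by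
  have hpow : ∀ a : ℂ, a ^ 3 = 1 → a ^ p = a ^ (p % 3) := by
    intro a ha
    conv_lhs => rw [← Nat.div_add_mod p 3, pow_add, pow_mul, ha, one_pow, one_mul]
  rw [Set.ncard_eq_one]
  have hr : p % 3 = 1 ∨ p % 3 = 2 := by omega
  rcases hr with hr | hr
  · refine ⟨ζ, Set.ext fun a => ⟨?_, ?_⟩⟩
    · rintro ⟨h1, h2⟩
      rw [hpow a h2, hr, pow_one] at h1
      exact h1
    · rintro rfl
      exact ⟨by rw [hpow _ hζ, hr, pow_one], hζ⟩
  · refine ⟨ζ ^ 2, Set.ext fun a => ⟨?_, ?_⟩⟩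
    · rintro ⟨h1, h2⟩
      rw [hpow a h2, hr] at h1
      rw [Set.mem_singleton_iff, ← h1]
      linear_combination (-a) * h2
    · rintro rfl
      have h2 : (ζ ^ 2) ^ 3 = 1 := by rw [← pow_mul, mul_comm, pow_mul, hζ, one_pow]
      refine ⟨?_, h2⟩
      rw [hpow _ h2, hr]
      linear_combination ζ * hζ

lemma ncard_of_dvd_of_ne_one {p : ℕ} (hp : 3 ∣ p) {ζ : ℂ} (hζ : ζ ≠ 1) :
    {a : ℂ | a ^ p = ζ ∧ a ^ 3 = 1}.ncard = 0 := by
  obtain ⟨k, rfl⟩ := hp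
  have : {a : ℂ | a ^ (3 * k) = ζ ∧ a ^ 3 = 1} = ∅ := by
    ext a
    simp only [Set.mem_ofPred_eq, Set.mem_empty_iff_false, iff_false, not_and]
    intro h1 h2
    rw [pow_mul, h2, one_pow] at h1
    exact hζ h1.symm
  rw [this, Set.ncard_empty]

lemma ncard_of_dvd_one {p : ℕ} (hp : 3 ∣ p) :
    {a : ℂ | a ^ p = 1 ∧ a ^ 3 = 1}.ncard = 3 := by
  obtain ⟨k, rfl⟩ := hp
  have : {a : ℂ | a ^ (3 * k) = 1 ∧ a ^ 3 = 1} = {a : ℂ | a ^ 3 = 1} := by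
    ext a
    simp only [Set.mem_ofPred_eq, and_iff_right_iff_imp]
    intro h
    rw [pow_mul, h, one_pow]
  rw [this]
  exact (ncard_roots (by norm_num) one_ne_zero).2

/-- Counting `p`-th roots of central elements in `SU(3)` with exactly two
distinct eigenvalues: if `3 ∤ p` then `g_ℓ(p) = p − 1` for each `ℓ`; if `3 ∣ p` then
`g_0(p) = p − 3` and `g_1(p) = g_2(p) = p`. -/
theorem count_roots_two_distinct_eigenvalues (p : ℕ) (hp : 0 < p) :
    (¬ (3 ∣ p) → ∀ l : Fin 3,
      (countTwo p (omega3 ^ (l : ℕ)) : ℤ) = (p : ℤ) - 1) ∧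
    (3 ∣ p →
      (countTwo p (omega3 ^ (0 : ℕ)) : ℤ) = (p : ℤ) - 3 ∧
      (countTwo p (omega3 ^ (1 : ℕ)) : ℤ) = (p : ℤ) ∧
      (countTwo p (omega3 ^ (2 : ℕ)) : ℤ) = (p : ℤ)) := by
  have hω : omega3 ^ 3 = 1 := omega3_prim.pow_eq_one
  have hω3 : ∀ l : ℕ, (omega3 ^ l) ^ 3 = 1 := by
    intro l
    rw [← pow_mul, mul_comm, pow_mul, hω, one_pow]
  refine ⟨fun h3 l => ?_, fun h3 => ⟨?_, ?_, ?_⟩⟩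
  · have h := countTwo_add hp (hω3 l)
    rw [ncard_of_not_dvd h3 (hω3 l)] at h
    omega
  · have h := countTwo_add hp (hω3 0)
    rw [pow_zero] at h ⊢
    rw [ncard_of_dvd_one h3] at h
    omega
  · have h := countTwo_add hp (hω3 1)
    rw [ncard_of_dvd_of_ne_one h3 (omega3_prim.pow_ne_one_of_pos_of_lt (by norm_num)
      (by norm_num))] at h
    omega
  · have h := countTwo_add hp (hω3 2)
    rw [ncard_of_dvd_of_ne_one h3 (omega3_prim.pow_ne_one_of_pos_of_lt (by norm_num)
      (by norm_num))] at h
    omega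
end

section
/- Let p, q, m be pairwise coprime positive integers and let n ≥ 0 be an integer; set r = p·q·n + m. Then there exist integers a and c with a·r·(p+q) + c·p·q = 1 such that: if 3 does not divide p·q, then a ≡ 0 (mod 3) and c ≡ p·q (mod 3); and if 3 divides p·q, then a ≡ (p+q)·m (mod 3) and c ≡ −m (mod 3). In particular, the residues of a and c modulo 3 can be chosen independently of n. -/
/-!
Write `R = (pqn + m)(p + q)` and `P = pq`; the coprimality hypotheses make `R` and `P` coprime.

If `3 ∤ P`, then `3R` and `P` are still coprime, so a Bézout identity `u(3R) + cP = 1` gives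
`a = 3u`, and reducing modulo 3 shows that `c` is the inverse of `P`, which is `P` itself.

If `3 ∣ P`, then `aR ≡ 1 (mod 3)` for every Bézout pair, so `a ≡ R ≡ (p + q)m`. Replacing `(a, c)`
by `(a + tP, c - tR)` keeps the class of `a` and moves `c` through all classes modulo 3,
since `R` is invertible modulo 3.
-/

/-- Every unit modulo 3 is its own inverse. -/
lemma modEq_three_of_mul_eq_one {x y : ℤ} (h : x * y ≡ 1 [ZMOD 3]) : x ≡ y [ZMOD 3] := by
  have key : ∀ u v : ZMod 3, u * v = 1 → u = v := by decide
  have h' := (ZMod.intCast_eq_intCast_iff (x * y) 1 3).2 h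
  push_cast at h'
  exact (ZMod.intCast_eq_intCast_iff x y 3).1 (key _ _ h')

lemma exists_bezout_of_not_three_dvd {R P : ℤ} (h : IsCoprime R P) (h3 : ¬ 3 ∣ P) :
    ∃ a c : ℤ, a * R + c * P = 1 ∧ a ≡ 0 [ZMOD 3] ∧ c ≡ P [ZMOD 3] := by
  have h3P : IsCoprime (3 : ℤ) P := (Int.prime_three.coprime_iff_not_dvd).2 h3
  obtain ⟨u, c, huc⟩ := h3P.mul_left h
  refine ⟨3 * u, c, by linarith, Int.modEq_zero_iff_dvd.2 ⟨u, rfl⟩,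
    modEq_three_of_mul_eq_one (Int.modEq_iff_dvd.2 ⟨u * R, by linarith⟩)⟩

/-- When `3 ∣ P`, the class of the second coefficient modulo 3 can be prescribed freely, while that
of the first is forced. -/
lemma exists_bezout_of_three_dvd {R P : ℤ} (h : IsCoprime R P) (h3 : 3 ∣ P) (s : ℤ) :
    ∃ a c : ℤ, a * R + c * P = 1 ∧ a ≡ R [ZMOD 3] ∧ c ≡ s [ZMOD 3] := by
  obtain ⟨a, c, hac⟩ := h
  obtain ⟨k, rfl⟩ := h3
  -- As `a` inverts `R` modulo 3, the shift `t = a * (c - s)` makes `c - t * R ≡ s`.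
  have hnew : (a + a * (c - s) * (3 * k)) * R + (c - a * (c - s) * R) * (3 * k) = 1 := by
    linear_combination hac
  refine ⟨_, _, hnew, modEq_three_of_mul_eq_one (Int.modEq_iff_dvd.2
    ⟨(c - a * (c - s) * R) * k, by linear_combination -hnew⟩), Int.modEq_iff_dvd.2
    ⟨-(c - s) * c * k, by linear_combination (c - s) * hac⟩⟩

/-- For pairwise coprime positive `p, q, m` and `n ≥ 0`, with
`r = pqn + m`, there exist integers `a, c` with `a·r·(p+q) + c·p·q = 1` whose residues mod 3
are as prescribed (and in particular independent of `n`): if `3 ∤ pq` then `a ≡ 0` and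
`c ≡ pq (mod 3)`; if `3 ∣ pq` then `a ≡ (p+q)·m` and `c ≡ −m (mod 3)`. -/
theorem bezout_coefficients_mod_three (p q m : ℕ) (hp : 0 < p) (hq : 0 < q) (hm : 0 < m)
    (hpq : Nat.Coprime p q) (hpm : Nat.Coprime p m) (hqm : Nat.Coprime q m) (n : ℕ) :
    ∃ a c : ℤ,
      a * ((p : ℤ) * q * n + m) * ((p : ℤ) + q) + c * ((p : ℤ) * q) = 1 ∧
      (¬ (3 ∣ p * q) → a ≡ 0 [ZMOD 3] ∧ c ≡ (p : ℤ) * q [ZMOD 3]) ∧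
      ((3 ∣ p * q) → a ≡ ((p : ℤ) + q) * m [ZMOD 3] ∧ c ≡ -(m : ℤ) [ZMOD 3]) := by
  have hpq' : IsCoprime (p : ℤ) q := Nat.isCoprime_iff_coprime.2 hpq
  have hpm' : IsCoprime (p : ℤ) m := Nat.isCoprime_iff_coprime.2 hpm
  have hqm' : IsCoprime (q : ℤ) m := Nat.isCoprime_iff_coprime.2 hqm
  have hr : IsCoprime ((p : ℤ) * q * n + m) ((p : ℤ) * q) :=
    ((hpm'.mul_left hqm').symm).mul_add_left_left n
  have hs : IsCoprime ((p : ℤ) + q) ((p : ℤ) * q) := by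
    refine IsCoprime.mul_right ?_ ?_
    · simpa [add_comm] using hpq'.symm.add_mul_left_left 1
    · simpa using hpq'.add_mul_left_left 1
  have hR := hr.mul_left hs
  by_cases h3 : 3 ∣ p * q
  · have h3' : (3 : ℤ) ∣ (p : ℤ) * q := by exact_mod_cast h3
    obtain ⟨a, c, hac, ha, hc⟩ := exists_bezout_of_three_dvd hR h3' (-m)
    refine ⟨a, c, by linarith, fun h => absurd h3 h, fun _ => ⟨ha.trans ?_, hc⟩⟩
    obtain ⟨k, hk⟩ := h3'
    exact Int.modEq_iff_dvd.2 ⟨-(k * n * (p + q)), by rw [hk]; ring⟩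
  · have h3' : ¬ (3 : ℤ) ∣ (p : ℤ) * q := by exact_mod_cast h3
    obtain ⟨a, c, hac, ha, hc⟩ := exists_bezout_of_not_three_dvd hR h3'
    exact ⟨a, c, by linarith, fun _ => ⟨ha, hc⟩, fun h => absurd h h3⟩
end
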